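/- In the simplified model, the variance of the sum of squared pre-averaged observations satisfies lim_{n→∞} n^{1/2} · Var(Σ_{i=2}^m Ȳ_{i,m}²) = (4/c)(σ² ∫₀¹ Λ(u)Λ(1−u) du − τ²c² ∫₀¹ λ(u)λ(1−u) du)² + (2/c)(σ² + 2τ²c² ∫₀¹ λ(u)² du)². -/

import Mathlib

open MeasureTheory ProbabilityTheory Real

noncomputable section

/-- `Λ(u) = -∫₀ᵘ λ(v) dv`. -/
def bigLam (lam : ℝ → ℝ) (u : ℝ) : ℝ := -∫ v in (0:ℝ)..u, lam v

/-- A (normalized) pre-average function: piecewise Lipschitz on `[0,2]`,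
antisymmetric about `1`, and normalized. -/
structure IsPreAverageFn (lam : ℝ → ℝ) : Prop where
  piecewise_lipschitz : ∃ (N : ℕ) (t : ℕ → ℝ) (K : NNReal),
      0 < N ∧ t 0 = 0 ∧ t N = 2 ∧ (∀ i < N, t i < t (i + 1)) ∧
      ∀ i < N, LipschitzOnWith K lam (Set.Ioo (t i) (t (i + 1)))
  antisymm : ∀ t ∈ Set.Icc (0:ℝ) 1, lam t = - lam (2 - t)
  normalized : Real.sqrt (2 * ∫ s in (0:ℝ)..1, (∫ u in (0:ℝ)..s, lam u) ^ 2) = 1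

/-- `m = n / ⌊√n / c⌋`. -/
def mOf (c : ℝ) (n : ℕ) : ℕ := n / ⌊Real.sqrt n / c⌋₊

/-- The indices `j` with `j/n ∈ [(i-2)/m , i/m]`. -/
def blockIdx (n m i : ℕ) : Finset ℕ :=
  (Finset.range (n + 1)).filter fun j =>
    ((i : ℝ) - 2) / m ≤ (j : ℝ) / n ∧ (j : ℝ) / n ≤ (i : ℝ) / m

variable {Ω : Type*}

/-- Pre-averaged value `Ā_{i,m} = (m/n) ∑_{j/n ∈ [(i-2)/m, i/m]} λ(m j/n - (i-2)) A_j`. -/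
def preAvg (lam : ℝ → ℝ) (n m : ℕ) (A : ℕ → Ω → ℝ) (i : ℕ) (ω : Ω) : ℝ :=
  ((m : ℝ) / n) * ∑ j ∈ blockIdx n m i,
    lam ((m : ℝ) * j / n - ((i : ℝ) - 2)) * A j ω

/-- Bias correction `𝔟(λ, A)_{i,m}`. -/
def biasCorr (lam : ℝ → ℝ) (n m : ℕ) (A : ℕ → Ω → ℝ) (i : ℕ) (ω : Ω) : ℝ :=
  ((m : ℝ) ^ 2 / (2 * (n : ℝ) ^ 2)) * ∑ j ∈ (blockIdx n m i).filter (fun j => 1 ≤ j),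
    (lam ((m : ℝ) * j / n - ((i : ℝ) - 2))) ^ 2 * (A j ω - A (j - 1) ω) ^ 2

/-- The simplified model: `(W_{j/n})_j` and `(η_{j,n})_j` form a centered jointly Gaussian
family with `Cov(W_{j/n}, W_{l/n}) = min(j,l)/n`, `(η_{j,n})` standard Gaussian i.i.d.
and uncorrelated with the `W` grid values. -/
def IsSimplifiedModel [MeasureSpace Ω] (n : ℕ) (W η : ℕ → Ω → ℝ) : Prop :=
  (∀ j, Measurable (W j)) ∧ (∀ j, Measurable (η j)) ∧
  (∀ a b : ℕ → ℝ, ∃ v : NNReal,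
    Measure.map (fun ω => ∑ j ∈ Finset.range (n + 1), (a j * W j ω + b j * η j ω)) ℙ
      = gaussianReal 0 v) ∧
  (∀ j l, j ≤ n → l ≤ n → ∫ ω, W j ω * W l ω = (min j l : ℝ) / n) ∧
  (∀ j l, j ≤ n → l ≤ n → ∫ ω, η j ω * η l ω = if j = l then 1 else 0) ∧
  (∀ j l, j ≤ n → l ≤ n → ∫ ω, W j ω * η l ω = 0)

/-- The observations `Y_{j,n} = σ W_{j/n} + τ η_{j,n}`. -/
def obs (σ τ : ℝ) (W η : ℕ → Ω → ℝ) (j : ℕ) (ω : Ω) : ℝ := σ * W j ω + τ * η j ω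

end

lemma fourth_moment_gaussian (v : NNReal) :
    ∫ x, x ^ 4 ∂(gaussianReal 0 v) = 3 * (v : ℝ) ^ 2 := by
  have h := iteratedDeriv_mgf_zero (X := id) (μ := gaussianReal 0 v) (by simp) 4
  have h2 : ∫ x, x ^ 4 ∂(gaussianReal 0 v) = iteratedDeriv 4 (mgf id (gaussianReal 0 v)) 0 := by
    rw [h]; simp
  rw [h2, mgf_id_gaussianReal]
  set w : ℝ := (v : ℝ)
  have e0 : ∀ t : ℝ, HasDerivAt (fun t : ℝ => rexp (0 * t + w * t ^ 2 / 2))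
      (w * t * rexp (0 * t + w * t ^ 2 / 2)) t := by
    intro t
    have : HasDerivAt (fun t : ℝ => 0 * t + w * t ^ 2 / 2) (w * t) t := by
      have := (((hasDerivAt_id t).const_mul (0:ℝ))).add
        ((((hasDerivAt_id t).pow 2).const_mul w).div_const 2)
      convert! this using 1
      simp
      ring
    convert! this.exp using 1
    ring
  have key : ∀ (p p' : ℝ → ℝ), (∀ t, HasDerivAt p (p' t) t) →
      deriv (fun t : ℝ => p t * rexp (0 * t + w * t ^ 2 / 2)) =
        fun t => (p' t + p t * (w * t)) * rexp (0 * t + w * t ^ 2 / 2) := by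
    intro p p' hp
    funext t
    have := ((hp t).fun_mul (e0 t)).deriv
    rw [this]
    ring
  have d1 : deriv (fun t : ℝ => rexp (0 * t + w * t ^ 2 / 2)) =
      fun t => (w * t) * rexp (0 * t + w * t ^ 2 / 2) := by
    funext t; exact (e0 t).deriv
  rw [iteratedDeriv_succ', iteratedDeriv_succ', iteratedDeriv_succ', iteratedDeriv_succ',
    iteratedDeriv_zero, d1, key (fun t => w * t) (fun t => w)]
  · rw [key (fun t => w + w * t * (w * t)) (fun t => 2 * w ^ 2 * t)]
    · rw [key (fun t => 2 * w ^ 2 * t + (w + w * t * (w * t)) * (w * t))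
        (fun t => 3 * w ^ 2 + 3 * w ^ 3 * t ^ 2)]
      · simp
      · intro t
        have := ((hasDerivAt_id t).const_mul (3 * w ^ 2)).add
          (((hasDerivAt_id t).pow 3).const_mul (w ^ 3))
        convert! this using 1
        · funext t; simp; ring
        · simp; ring
    · intro t
      have := ((((hasDerivAt_id t).pow 2).const_mul (w ^ 2))).const_add w
      convert! this using 1
      · funext t; simp; ring
      · simp; ring
  · intro t
    simpa using (hasDerivAt_id t).const_mul w

lemma second_moment_gaussian (v : NNReal) :
    ∫ x, x ^ 2 ∂(gaussianReal 0 v) = (v : ℝ) := by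
  have h := variance_eq_sub (X := fun x : ℝ => x) (μ := gaussianReal 0 v) (memLp_id_gaussianReal 2)
  rw [variance_fun_id_gaussianReal] at h
  simp only [integral_id_gaussianReal] at h
  rw [h]
  simp

/-- A real random variable with a centered Gaussian law. -/
def CGauss {Ω : Type*} [MeasurableSpace Ω] (P : Measure Ω) (X : Ω → ℝ) : Prop :=
  Measurable X ∧ ∃ v : NNReal, Measure.map X P = gaussianReal 0 v

lemma CGauss.memLp {Ω : Type*} [MeasurableSpace Ω] {P : Measure Ω} {X : Ω → ℝ}
    (h : CGauss P X) (p : NNReal) : MemLp X p P := by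
  obtain ⟨hm, v, hv⟩ := h
  have := memLp_id_gaussianReal (μ := 0) (v := v) p
  rw [← hv, memLp_map_measure_iff aestronglyMeasurable_id hm.aemeasurable] at this
  exact this

lemma CGauss.memLp2 {Ω : Type*} [MeasurableSpace Ω] {P : Measure Ω} {X : Ω → ℝ}
    (h : CGauss P X) : MemLp X 2 P := by
  simpa using h.memLp 2

lemma CGauss.fourth {Ω : Type*} [MeasurableSpace Ω] {P : Measure Ω} {X : Ω → ℝ}
    (h : CGauss P X) : ∫ ω, X ω ^ 4 ∂P = 3 * (∫ ω, X ω ^ 2 ∂P) ^ 2 := by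
  obtain ⟨hm, v, hv⟩ := h
  have h4 := fourth_moment_gaussian v
  have h2 := second_moment_gaussian v
  rw [← hv, integral_map hm.aemeasurable (by fun_prop)] at h4 h2
  rw [h4, h2]

lemma CGauss.integrable_prod4 {Ω : Type*} [MeasurableSpace Ω] {P : Measure Ω} {X Y : Ω → ℝ}
    (hX : CGauss P X) (hY : CGauss P Y) : Integrable (fun ω => X ω ^ 2 * Y ω ^ 2) P := by
  have aux : ∀ Z : Ω → ℝ, CGauss P Z → MemLp (fun ω => Z ω ^ 2) 2 P := by
    intro Z hZ
    have h4 : Integrable (fun ω => ‖Z ω‖ ^ 4) P := (hZ.memLp 4).integrable_norm_pow (by norm_num)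
    rw [memLp_two_iff_integrable_sq (hZ.1.pow_const 2).aestronglyMeasurable]
    refine h4.congr (Filter.Eventually.of_forall fun ω => ?_)
    simp only [Real.norm_eq_abs]
    rw [← pow_mul]
    exact Even.pow_abs (by decide) _
  exact (aux X hX).integrable_mul (aux Y hY)

lemma CGauss.sq_memLp {Ω : Type*} [MeasurableSpace Ω] {P : Measure Ω} {Z : Ω → ℝ}
    (hZ : CGauss P Z) : MemLp (fun ω => Z ω ^ 2) 2 P := by
  rw [memLp_two_iff_integrable_sq (hZ.1.pow_const 2).aestronglyMeasurable]
  refine (hZ.integrable_prod4 hZ).congr (Filter.Eventually.of_forall fun ω => ?_)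
  simp only; ring

lemma isserlis {Ω : Type*} [MeasurableSpace Ω] {P : Measure Ω} {X Y : Ω → ℝ}
    (hX : CGauss P X) (hY : CGauss P Y) (hp : CGauss P (fun ω => X ω + Y ω))
    (hm : CGauss P (fun ω => X ω - Y ω)) :
    ∫ ω, X ω ^ 2 * Y ω ^ 2 ∂P = (∫ ω, X ω ^ 2 ∂P) * (∫ ω, Y ω ^ 2 ∂P)
      + 2 * (∫ ω, X ω * Y ω ∂P) ^ 2 := by
  have iX2 : Integrable (fun ω => X ω ^ 2) P := (hX.memLp2).integrable_sq
  have iY2 : Integrable (fun ω => Y ω ^ 2) P := (hY.memLp2).integrable_sq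
  have iXY : Integrable (fun ω => X ω * Y ω) P := (hX.memLp2).integrable_mul (hY.memLp2)
  have iq := hX.integrable_prod4 hY
  have i4 : ∀ Z : Ω → ℝ, CGauss P Z → Integrable (fun ω => Z ω ^ 4) P := by
    intro Z hZ
    refine (hZ.integrable_prod4 hZ).congr (Filter.Eventually.of_forall fun ω => ?_)
    simp only; ring
  have e1 := hp.fourth
  have e2 := hm.fourth
  have e3 := hX.fourth
  have e4 := hY.fourth
  have f1 : ∫ ω, (X ω + Y ω) ^ 2 ∂P
      = ∫ ω, X ω ^ 2 ∂P + 2 * ∫ ω, X ω * Y ω ∂P + ∫ ω, Y ω ^ 2 ∂P := by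
    rw [← integral_const_mul, ← integral_add iX2 (iXY.const_mul 2),
      ← integral_add (iX2.fun_add (iXY.const_mul 2)) iY2]
    congr 1; funext ω; ring
  have f2 : ∫ ω, (X ω - Y ω) ^ 2 ∂P
      = ∫ ω, X ω ^ 2 ∂P - 2 * ∫ ω, X ω * Y ω ∂P + ∫ ω, Y ω ^ 2 ∂P := by
    have s1 : Integrable (fun ω => X ω ^ 2 - 2 * (X ω * Y ω)) P := iX2.sub (iXY.const_mul 2)
    rw [← integral_const_mul, ← integral_sub iX2 (iXY.const_mul 2),
      ← integral_add s1 iY2]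
    congr 1; funext ω; ring
  have f3 : 12 * ∫ ω, X ω ^ 2 * Y ω ^ 2 ∂P = ∫ ω, (X ω + Y ω) ^ 4 ∂P + ∫ ω, (X ω - Y ω) ^ 4 ∂P
      - 2 * ∫ ω, X ω ^ 4 ∂P - 2 * ∫ ω, Y ω ^ 4 ∂P := by
    have a1 := i4 _ hp
    have a2 := i4 _ hm
    have a3 := (i4 _ hX).const_mul 2
    have a4 := (i4 _ hY).const_mul 2
    have s2 : Integrable (fun ω => (X ω + Y ω) ^ 4 + (X ω - Y ω) ^ 4 - 2 * X ω ^ 4) P :=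
      (a1.fun_add a2).sub a3
    rw [← integral_const_mul, ← integral_const_mul, ← integral_const_mul, ← integral_add a1 a2,
      ← integral_sub (a1.fun_add a2) a3, ← integral_sub s2 a4]
    congr 1; funext ω; ring
  rw [e1, e2, e3, e4, f1, f2] at f3
  linear_combination f3 / 12

lemma variance_sum_sq {Ω : Type*} [MeasurableSpace Ω] {P : Measure Ω} [IsProbabilityMeasure P]
    (X : ℕ → Ω → ℝ) (s : Finset ℕ)
    (hX : ∀ i ∈ s, CGauss P (X i))
    (hp : ∀ i ∈ s, ∀ j ∈ s, CGauss P (fun ω => X i ω + X j ω))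
    (hm : ∀ i ∈ s, ∀ j ∈ s, CGauss P (fun ω => X i ω - X j ω)) :
    variance (fun ω => ∑ i ∈ s, X i ω ^ 2) P
      = 2 * ∑ i ∈ s, ∑ j ∈ s, (∫ ω, X i ω * X j ω ∂P) ^ 2 := by
  rw [variance_fun_sum' (X := fun i ω => X i ω ^ 2) (fun i hi => (hX i hi).sq_memLp),
    Finset.mul_sum]
  refine Finset.sum_congr rfl fun i hi => ?_
  rw [Finset.mul_sum]
  refine Finset.sum_congr rfl fun j hj => ?_
  rw [covariance_eq_sub (hX i hi).sq_memLp (hX j hj).sq_memLp]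
  have := isserlis (hX i hi) (hX j hj) (hp i hi j hj) (hm i hi j hj)
  simp only [Pi.mul_apply]
  rw [this]
  ring

/-- Linear combination of the grid values. -/
def linC {Ω : Type*} (n : ℕ) (W η : ℕ → Ω → ℝ) (a b : ℕ → ℝ) (ω : Ω) : ℝ :=
  ∑ j ∈ Finset.range (n + 1), (a j * W j ω + b j * η j ω)

section model
variable {Ω' : Type*} [MeasureSpace Ω'] {n : ℕ} {W η : ℕ → Ω' → ℝ}

lemma linC_gauss (h : IsSimplifiedModel n W η) (a b : ℕ → ℝ) :
    CGauss (ℙ : Measure Ω') (linC n W η a b) := by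
  obtain ⟨hW, hη, hg, -⟩ := h
  refine ⟨?_, hg a b⟩
  unfold linC
  fun_prop

lemma W_gauss (h : IsSimplifiedModel n W η) {j : ℕ} (hj : j ≤ n) :
    CGauss (ℙ : Measure Ω') (W j) := by
  have := linC_gauss h (fun i => if i = j then 1 else 0) 0
  convert! this using 1
  funext ω
  have : j < n + 1 := by omega
  simp [linC, this]

lemma eta_gauss (h : IsSimplifiedModel n W η) {j : ℕ} (hj : j ≤ n) :
    CGauss (ℙ : Measure Ω') (η j) := by
  have := linC_gauss h 0 (fun i => if i = j then 1 else 0)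
  convert! this using 1
  funext ω
  have : j < n + 1 := by omega
  simp [linC, this]

lemma linC_cov (h : IsSimplifiedModel n W η) (a b a' b' : ℕ → ℝ) :
    ∫ ω, linC n W η a b ω * linC n W η a' b' ω
      = ∑ j ∈ Finset.range (n + 1), ∑ l ∈ Finset.range (n + 1),
          a j * a' l * ((min j l : ℝ) / n)
        + ∑ j ∈ Finset.range (n + 1), b j * b' j := by
  have hh := h
  obtain ⟨hW, hη, hg, hWW, hηη, hWη⟩ := hh
  have iWW : ∀ j l, j ≤ n → l ≤ n → Integrable (fun ω => W j ω * W l ω) :=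
    fun j l hj hl => ((W_gauss h hj).memLp2).integrable_mul ((W_gauss h hl).memLp2)
  have iWη : ∀ j l, j ≤ n → l ≤ n → Integrable (fun ω => W j ω * η l ω) :=
    fun j l hj hl => ((W_gauss h hj).memLp2).integrable_mul ((eta_gauss h hl).memLp2)
  have iηη : ∀ j l, j ≤ n → l ≤ n → Integrable (fun ω => η j ω * η l ω) :=
    fun j l hj hl => ((eta_gauss h hj).memLp2).integrable_mul ((eta_gauss h hl).memLp2)
  have expand : ∀ j l, (fun ω => (a j * W j ω + b j * η j ω) * (a' l * W l ω + b' l * η l ω))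
      = fun ω => a j * a' l * (W j ω * W l ω) + a j * b' l * (W j ω * η l ω)
        + b j * a' l * (W l ω * η j ω) + b j * b' l * (η j ω * η l ω) := by
    intro j l; funext ω; ring
  have i1 : ∀ j l, j ≤ n → l ≤ n → Integrable
      (fun ω => (a j * W j ω + b j * η j ω) * (a' l * W l ω + b' l * η l ω)) := by
    intro j l hj hl
    rw [expand]
    exact ((((iWW j l hj hl).const_mul _).add ((iWη j l hj hl).const_mul _)).add
      ((iWη l j hl hj).const_mul _)).add ((iηη j l hj hl).const_mul _)
  have v1 : ∀ j l, j ≤ n → l ≤ n →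
      ∫ ω, (a j * W j ω + b j * η j ω) * (a' l * W l ω + b' l * η l ω)
        = a j * a' l * ((min j l : ℝ) / n) + if j = l then b j * b' l else 0 := by
    intro j l hj hl
    rw [expand]
    have q1 := (iWW j l hj hl).const_mul (a j * a' l)
    have q2 := (iWη j l hj hl).const_mul (a j * b' l)
    have q3 := (iWη l j hl hj).const_mul (b j * a' l)
    have q4 := (iηη j l hj hl).const_mul (b j * b' l)
    rw [integral_add ((q1.fun_add q2).fun_add q3) q4, integral_add (q1.fun_add q2) q3, integral_add q1 q2,
      integral_const_mul, integral_const_mul, integral_const_mul, integral_const_mul,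
      hWW j l hj hl, hWη j l hj hl, hWη l j hl hj, hηη j l hj hl]
    split_ifs <;> ring
  unfold linC
  simp_rw [Finset.sum_mul_sum]
  rw [integral_finsetSum]
  · rw [← Finset.sum_add_distrib]
    refine Finset.sum_congr rfl fun j hj => ?_
    have hj' : j ≤ n := by simpa [Nat.lt_succ_iff] using hj
    rw [integral_finsetSum]
    · have : ∀ l ∈ Finset.range (n+1),
        ∫ ω, (a j * W j ω + b j * η j ω) * (a' l * W l ω + b' l * η l ω)
          = a j * a' l * ((min j l : ℝ) / n) + if j = l then b j * b' l else 0 := by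
        intro l hl
        exact v1 j l hj' (by simpa [Nat.lt_succ_iff] using hl)
      rw [Finset.sum_congr rfl this, Finset.sum_add_distrib, Finset.sum_ite_eq, if_pos hj]
    · intro l hl
      exact i1 j l hj' (by simpa [Nat.lt_succ_iff] using hl)
  · intro j hj
    refine integrable_finsetSum _ fun l hl => ?_
    exact i1 j l (by simpa [Nat.lt_succ_iff] using hj) (by simpa [Nat.lt_succ_iff] using hl)

end model

/-- Bounded variation, witnessed by a bounded dominating monotone function. -/
def BVb (f : ℝ → ℝ) (V : ℝ) : Prop :=
  ∃ h : ℝ → ℝ, (∀ x, |h x| ≤ V) ∧ ∀ x y, x ≤ y → |f y - f x| ≤ h y - h x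

lemma BVb.add {f g : ℝ → ℝ} {V U : ℝ} (hf : BVb f V) (hg : BVb g U) :
    BVb (fun x => f x + g x) (V + U) := by
  obtain ⟨h, h1, h2⟩ := hf
  obtain ⟨k, k1, k2⟩ := hg
  refine ⟨fun x => h x + k x, fun x => (abs_add_le _ _).trans (add_le_add (h1 x) (k1 x)), ?_⟩
  intro x y hxy
  have e : f y + g y - (f x + g x) = (f y - f x) + (g y - g x) := by ring
  rw [e]
  refine (abs_add_le _ _).trans ?_
  have := h2 x y hxy
  have := k2 x y hxy
  linarith

lemma BVb.mul {f g : ℝ → ℝ} {V U A B : ℝ} (hf : BVb f V) (hg : BVb g U)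
    (hA : ∀ x, |f x| ≤ A) (hB : ∀ x, |g x| ≤ B) :
    BVb (fun x => f x * g x) (B * V + A * U) := by
  obtain ⟨h, h1, h2⟩ := hf
  obtain ⟨k, k1, k2⟩ := hg
  have A0 : 0 ≤ A := (abs_nonneg _).trans (hA 0)
  have B0 : 0 ≤ B := (abs_nonneg _).trans (hB 0)
  refine ⟨fun x => B * h x + A * k x, fun x => ?_, ?_⟩
  · refine (abs_add_le _ _).trans ?_
    rw [abs_mul, abs_mul, abs_of_nonneg A0, abs_of_nonneg B0]
    gcongr
    · exact h1 x
    · exact k1 x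
  intro x y hxy
  have e : f y * g y - f x * g x = (f y - f x) * g y + f x * (g y - g x) := by ring
  rw [e]
  refine (abs_add_le _ _).trans ?_
  rw [abs_mul, abs_mul]
  have q1 : |f y - f x| * |g y| ≤ (h y - h x) * B :=
    mul_le_mul (h2 x y hxy) (hB y) (abs_nonneg _) ((abs_nonneg _).trans (h2 x y hxy))
  have q2 : |f x| * |g y - g x| ≤ A * (k y - k x) :=
    mul_le_mul (hA x) (k2 x y hxy) (abs_nonneg _) A0
  linarith

lemma BVb.shift {f : ℝ → ℝ} {V : ℝ} (hf : BVb f V) (p : ℝ) : BVb (fun x => f (x - p)) V := by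
  obtain ⟨h, h1, h2⟩ := hf
  exact ⟨fun x => h (x - p), fun x => h1 _, fun x y hxy => h2 _ _ (by linarith)⟩

lemma BVb.abs {f : ℝ → ℝ} {V : ℝ} (hf : BVb f V) : BVb (fun x => |f x|) V := by
  obtain ⟨h, h1, h2⟩ := hf
  exact ⟨h, h1, fun x y hxy => (abs_abs_sub_abs_le_abs_sub _ _).trans (h2 x y hxy)⟩

lemma BVb.bounded {f : ℝ → ℝ} {V : ℝ} (hf : BVb f V) (x : ℝ) : |f x| ≤ |f 0| + 2 * V := by
  obtain ⟨h, h1, h2⟩ := hf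
  have a1 := abs_le.1 (h1 x)
  have a2 := abs_le.1 (h1 0)
  have e : f x = f 0 + (f x - f 0) := by ring
  have : |f x| ≤ |f 0| + |f x - f 0| := by
    conv_lhs => rw [e]
    exact abs_add_le _ _
  rcases le_total 0 x with hx | hx
  · have := h2 0 x hx
    linarith
  · have := h2 x 0 hx
    rw [abs_sub_comm] at this
    linarith

lemma BVb.monotone {f : ℝ → ℝ} {V : ℝ} (hf : Monotone f) (hV : ∀ x, |f x| ≤ V) : BVb f V :=
  ⟨f, hV, fun x y hxy => by rw [abs_of_nonneg (sub_nonneg.2 (hf hxy))]⟩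

lemma BVb.antitone {f : ℝ → ℝ} {V : ℝ} (hf : Antitone f) (hV : ∀ x, |f x| ≤ V) : BVb f V :=
  ⟨fun x => - f x, fun x => by rw [abs_neg]; exact hV x, fun x y hxy => by
    rw [abs_sub_comm, abs_of_nonneg (sub_nonneg.2 (hf hxy))]; linarith⟩

lemma BVb.clamp {f : ℝ → ℝ} {K a b : ℝ} (hK : 0 ≤ K) (hf : ∀ x y, x ≤ y → |f y - f x| ≤ K * (y - x)) :
    BVb (fun x => f (max a (min x b))) (K * (|a| + |b|)) := by
  refine ⟨fun x => K * max a (min x b), fun x => ?_, fun x y hxy => ?_⟩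
  · rw [abs_mul, abs_of_nonneg hK]
    gcongr
    rw [abs_le]
    constructor
    · have := neg_abs_le a
      have := abs_nonneg b
      have := le_max_left a (min x b)
      linarith
    · refine max_le ?_ ((min_le_right _ _).trans ?_)
      · have := le_abs_self a
        have := abs_nonneg b
        linarith
      · have := le_abs_self b
        have := abs_nonneg a
        linarith
  · have := hf (max a (min x b)) (max a (min y b)) (max_le_max le_rfl (min_le_min hxy le_rfl))
    linarith

lemma BVb.intervalIntegrable {f : ℝ → ℝ} {V : ℝ} (hf : BVb f V) (a b : ℝ) :
    IntervalIntegrable f volume a b := by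
  obtain ⟨h, h1, h2⟩ := hf
  have m1 : Monotone h := fun x y hxy => by
    have := (abs_nonneg _).trans (h2 x y hxy); linarith
  have m2 : Monotone (fun x => h x + f x) := fun x y hxy => by
    have := (abs_le.1 (h2 x y hxy)).1
    simp only
    linarith
  have := (m2.intervalIntegrable (μ := volume) (a := a) (b := b)).sub
    (m1.intervalIntegrable (μ := volume) (a := a) (b := b))
  convert! this using 1
  funext x
  simp

lemma BVb.riemann {f : ℝ → ℝ} {V : ℝ} (hf : BVb f V) {δ : ℝ} (hδ : 0 ≤ δ) (a : ℝ) {p q : ℕ}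
    (hpq : p ≤ q) :
    |δ * ∑ k ∈ Finset.Ico p q, f (δ * k - a) - ∫ x in (δ * p - a)..(δ * q - a), f x|
      ≤ 2 * V * δ := by
  have hf' := hf
  obtain ⟨h, h1, h2⟩ := hf'
  have key : |δ * ∑ k ∈ Finset.Ico p q, f (δ * k - a) - ∫ x in (δ * p - a)..(δ * q - a), f x|
      ≤ δ * (h (δ * q - a) - h (δ * p - a)) := by
    induction q, hpq using Nat.le_induction with
    | base => simp
    | succ q hq ih =>
      rw [Finset.sum_Ico_succ_top hq, ← intervalIntegral.integral_add_adjacent_intervals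
        (hf.intervalIntegrable (δ * p - a) (δ * q - a))
        (hf.intervalIntegrable (δ * q - a) (δ * (q + 1 : ℕ) - a))]
      have step : |δ * f (δ * q - a) - ∫ x in (δ * q - a)..(δ * (q + 1 : ℕ) - a), f x|
          ≤ δ * (h (δ * (q + 1 : ℕ) - a) - h (δ * q - a)) := by
        have hle : δ * q - a ≤ δ * (q + 1 : ℕ) - a := by push_cast; nlinarith
        have e : δ * f (δ * q - a) = ∫ x in (δ * q - a)..(δ * (q + 1 : ℕ) - a), f (δ * q - a) := by
          rw [intervalIntegral.integral_const, smul_eq_mul]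
          push_cast; ring
        rw [e, ← intervalIntegral.integral_sub (by simp) (hf.intervalIntegrable _ _)]
        have := intervalIntegral.norm_integral_le_of_norm_le_const
          (f := fun x => f (δ * q - a) - f x) (a := δ * q - a) (b := δ * (q + 1 : ℕ) - a)
          (C := h (δ * (q + 1 : ℕ) - a) - h (δ * q - a)) (by
            intro x hx
            rw [Set.uIoc_of_le hle] at hx
            rw [Real.norm_eq_abs, abs_sub_comm]
            have := h2 _ _ hx.1.le
            have := (abs_nonneg _).trans (h2 _ _ hx.2)
            linarith)
        rw [Real.norm_eq_abs] at this
        refine this.trans (le_of_eq ?_)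
        rw [abs_of_nonneg (by linarith)]
        push_cast; ring
      have e2 : δ * (∑ k ∈ Finset.Ico p q, f (δ * k - a) + f (δ * q - a)) -
          ((∫ x in (δ * p - a)..(δ * q - a), f x)
            + ∫ x in (δ * q - a)..(δ * (q + 1 : ℕ) - a), f x)
          = (δ * ∑ k ∈ Finset.Ico p q, f (δ * k - a) - ∫ x in (δ * p - a)..(δ * q - a), f x)
          + (δ * f (δ * q - a) - ∫ x in (δ * q - a)..(δ * (q + 1 : ℕ) - a), f x) := by ring
      rw [e2]
      refine (abs_add_le _ _).trans ?_
      linarith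
  refine key.trans ?_
  have a1 := abs_le.1 (h1 (δ * q - a))
  have a2 := abs_le.1 (h1 (δ * p - a))
  nlinarith

lemma BVb.mulE {f g : ℝ → ℝ} (hf : ∃ V, BVb f V) (hg : ∃ V, BVb g V) :
    ∃ V, BVb (fun x => f x * g x) V := by
  obtain ⟨V, hV⟩ := hf
  obtain ⟨U, hU⟩ := hg
  exact ⟨_, hV.mul hU hV.bounded hU.bounded⟩

lemma bv_ind_Ici (a : ℝ) : ∃ V, BVb ((Set.Ici a).indicator fun _ => (1:ℝ)) V := by
  refine ⟨1, BVb.monotone ?_ ?_⟩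
  · intro x y hxy
    simp only [Set.indicator_apply, Set.mem_Ici]
    split_ifs <;> linarith
  · intro x
    simp only [Set.indicator_apply]
    split_ifs <;> norm_num

lemma bv_ind_Ioi (a : ℝ) : ∃ V, BVb ((Set.Ioi a).indicator fun _ => (1:ℝ)) V := by
  refine ⟨1, BVb.monotone ?_ ?_⟩
  · intro x y hxy
    simp only [Set.indicator_apply, Set.mem_Ioi]
    split_ifs <;> linarith
  · intro x
    simp only [Set.indicator_apply]
    split_ifs <;> norm_num

lemma bv_ind_Iic (a : ℝ) : ∃ V, BVb ((Set.Iic a).indicator fun _ => (1:ℝ)) V := by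
  refine ⟨1, BVb.antitone ?_ ?_⟩
  · intro x y hxy
    simp only [Set.indicator_apply, Set.mem_Iic]
    split_ifs <;> linarith
  · intro x
    simp only [Set.indicator_apply]
    split_ifs <;> norm_num

lemma bv_ind_Iio (a : ℝ) : ∃ V, BVb ((Set.Iio a).indicator fun _ => (1:ℝ)) V := by
  refine ⟨1, BVb.antitone ?_ ?_⟩
  · intro x y hxy
    simp only [Set.indicator_apply, Set.mem_Iio]
    split_ifs <;> linarith
  · intro x
    simp only [Set.indicator_apply]
    split_ifs <;> norm_num

lemma bv_point (a r : ℝ) : ∃ V, BVb (fun x => if x = a then r else 0) V := by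
  have hc : ∃ V, BVb (fun _ => r) V := ⟨|r|, BVb.monotone monotone_const fun _ => le_rfl⟩
  obtain ⟨V, hV⟩ := BVb.mulE (BVb.mulE (bv_ind_Ici a) (bv_ind_Iic a)) hc
  refine ⟨V, ?_⟩
  convert! hV using 1
  funext x
  simp only [Set.indicator_apply, Set.mem_Ici, Set.mem_Iic]
  rcases lt_trichotomy x a with h | h | h
  · simp [h.ne, h.not_ge]
  · simp [h]
  · simp [h.ne', h.not_ge]

lemma bv_piece {f : ℝ → ℝ} {K : NNReal} {a b : ℝ} (hf : LipschitzOnWith K f (Set.Ioo a b)) :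
    ∃ V, BVb ((Set.Ioo a b).indicator f) V := by
  obtain ⟨h, hh, heq⟩ := hf.extend_real
  have hcl : ∃ V, BVb (fun x => h (max a (min x b))) V := by
    refine ⟨_, BVb.clamp K.2 fun x y hxy => ?_⟩
    have := hh.dist_le_mul y x
    rw [Real.dist_eq, Real.dist_eq, abs_of_nonneg (by linarith : 0 ≤ y - x)] at this
    exact this
  obtain ⟨V, hV⟩ := BVb.mulE (BVb.mulE (bv_ind_Ioi a) (bv_ind_Iio b)) hcl
  refine ⟨V, ?_⟩
  convert! hV using 1
  funext x
  by_cases h1 : a < x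
  · by_cases h2 : x < b
    · have hx : x ∈ Set.Ioo a b := ⟨h1, h2⟩
      simp [hx, h1, h2, heq hx, h1.le, h2.le]
    · simp [h2]
  · simp [h1]

/-- The pre-average function extended by zero. -/
noncomputable def gExt (lam : ℝ → ℝ) : ℝ → ℝ := (Set.Icc (0:ℝ) 2).indicator lam

lemma bv_gExt {lam : ℝ → ℝ} (hlam : IsPreAverageFn lam) : ∃ V, BVb (gExt lam) V := by
  obtain ⟨N, t, K, hN, t0, tN, hlt, hlip⟩ := hlam.piecewise_lipschitz
  have key : ∀ M ≤ N, 0 ≤ t M ∧ ∃ V, BVb ((Set.Icc (0:ℝ) (t M)).indicator lam) V := by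
    intro M
    induction M with
    | zero =>
      intro _
      refine ⟨t0.ge, ?_⟩
      obtain ⟨V, hV⟩ := bv_point 0 (lam 0)
      refine ⟨V, ?_⟩
      convert! hV using 1
      funext x
      rw [t0, Set.Icc_self]
      by_cases hx : x = 0 <;> simp [hx]
    | succ M ih =>
      intro hM
      obtain ⟨hpos, V, hV⟩ := ih (by omega)
      have h1 := hlt M (by omega)
      refine ⟨by linarith, ?_⟩
      obtain ⟨U, hU⟩ := bv_piece (hlip M (by omega))
      obtain ⟨Z, hZ⟩ := bv_point (t (M + 1)) (lam (t (M + 1)))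
      refine ⟨V + U + Z, ?_⟩
      · convert! (hV.add hU).add hZ using 1
        funext x
        simp only [Set.indicator_apply, Set.mem_Icc, Set.mem_Ioo]
        by_cases a1 : x ≤ t M
        · have b1 : x ≤ t (M+1) := by linarith
          have b2 : x ≠ t (M+1) := by intro h; linarith
          have b3 : ¬ (t M < x) := by linarith
          simp [a1, b1, b2, b3]
        · have b0 : 0 ≤ x := by linarith
          have b3 : t M < x := by linarith
          by_cases a2 : x = t (M + 1)
          · subst a2
            simp [a1, b0]
          · by_cases a3 : x < t (M + 1)
            · simp [a1, a2, a3, a3.le, b0, b3]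
            · have : ¬ (x ≤ t (M+1)) := fun h => a3 (lt_of_le_of_ne h a2)
              simp [a1, a2, a3, this]
  have := (key N le_rfl).2
  rwa [tN] at this

lemma int_zero_Ioo {F : ℝ → ℝ} {a b : ℝ} (hab : a ≤ b) (h : ∀ x ∈ Set.Ioo a b, F x = 0) :
    ∫ x in a..b, F x = 0 := by
  rw [intervalIntegral.integral_of_le hab, integral_Ioc_eq_integral_Ioo]
  exact setIntegral_eq_zero_of_forall_eq_zero h

lemma supp_integral {F : ℝ → ℝ} (hF : ∃ V, BVb F V) (hz : ∀ x, x < 0 ∨ 2 < x → F x = 0)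
    {a b : ℝ} (ha : a ≤ 0) (hb : 2 ≤ b) : ∫ x in a..b, F x = ∫ x in (0:ℝ)..2, F x := by
  obtain ⟨V, hV⟩ := hF
  rw [← intervalIntegral.integral_add_adjacent_intervals (hV.intervalIntegrable a 0)
    (hV.intervalIntegrable 0 b), ← intervalIntegral.integral_add_adjacent_intervals
    (hV.intervalIntegrable 0 2) (hV.intervalIntegrable 2 b),
    int_zero_Ioo ha fun x hx => hz x (Or.inl hx.2),
    int_zero_Ioo hb fun x hx => hz x (Or.inr hx.1)]
  ring

/-- Tail primitive. -/
noncomputable def Lf (g : ℝ → ℝ) (x : ℝ) : ℝ := ∫ y in x..2, g y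

section L
variable {g : ℝ → ℝ} {V B : ℝ}

lemma Lf_zero (hV : BVb g V) (hz : ∀ x, x < 0 ∨ 2 < x → g x = 0)
    (hint : ∫ x in (0:ℝ)..2, g x = 0) (x : ℝ) (hx : x ≤ 0 ∨ 2 ≤ x) : Lf g x = 0 := by
  unfold Lf
  rcases hx with hx | hx
  · rw [supp_integral ⟨V, hV⟩ hz hx le_rfl, hint]
  · rw [intervalIntegral.integral_symm, int_zero_Ioo hx fun y hy => hz y (Or.inr hy.1), neg_zero]

lemma Lf_lip (hV : BVb g V) (hB : ∀ x, |g x| ≤ B) (x y : ℝ) (hxy : x ≤ y) :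
    |Lf g y - Lf g x| ≤ B * (y - x) := by
  unfold Lf
  rw [← intervalIntegral.integral_add_adjacent_intervals (hV.intervalIntegrable x y)
    (hV.intervalIntegrable y 2)]
  have := intervalIntegral.norm_integral_le_of_norm_le_const (f := g) (a := x) (b := y) (C := B)
    (fun z _ => hB z)
  rw [Real.norm_eq_abs, abs_of_nonneg (by linarith : 0 ≤ y - x)] at this
  rw [abs_sub_comm]
  simpa using this

lemma Lf_bv (hV : BVb g V) (hB : ∀ x, |g x| ≤ B) (hz : ∀ x, x < 0 ∨ 2 < x → g x = 0)
    (hint : ∫ x in (0:ℝ)..2, g x = 0) : ∃ U, BVb (Lf g) U := by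
  have B0 : 0 ≤ B := (abs_nonneg _).trans (hB 0)
  have := BVb.clamp (a := 0) (b := 2) B0 (Lf_lip hV hB)
  refine ⟨_, (?_ : BVb (Lf g) (B * (|0| + |2|)))⟩
  convert! this using 1
  funext x
  rcases le_total x 0 with h | h
  · rw [Lf_zero hV hz hint x (Or.inl h), max_eq_left ((min_le_left _ _).trans h),
      Lf_zero hV hz hint 0 (Or.inl le_rfl)]
  · rcases le_total x 2 with h2 | h2
    · rw [min_eq_left h2, max_eq_right h]
    · rw [Lf_zero hV hz hint x (Or.inr h2), min_eq_right h2, max_eq_right (by norm_num),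
        Lf_zero hV hz hint 2 (Or.inr le_rfl)]

end L

lemma sum_min (u v : ℕ → ℝ) (n : ℕ) :
    ∑ j ∈ Finset.range (n + 1), ∑ l ∈ Finset.range (n + 1), u j * v l * (min (j:ℝ) (l:ℝ))
      = ∑ k ∈ Finset.range n, (∑ j ∈ Finset.Ico (k + 1) (n + 1), u j)
          * (∑ l ∈ Finset.Ico (k + 1) (n + 1), v l) := by
  have h1 : ∀ (w : ℕ → ℝ) (k : ℕ), ∑ j ∈ Finset.Ico (k + 1) (n + 1), w j
      = ∑ j ∈ Finset.range (n + 1), if k < j then w j else 0 := by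
    intro w k
    rw [← Finset.sum_filter]
    congr 1
    ext j
    simp only [Finset.mem_Ico, Finset.mem_filter, Finset.mem_range]
    omega
  simp_rw [h1, Finset.sum_mul_sum]
  symm
  rw [Finset.sum_comm]
  refine Finset.sum_congr rfl fun j hj => ?_
  rw [Finset.sum_comm]
  refine Finset.sum_congr rfl fun l hl => ?_
  simp only [Finset.mem_range] at hj hl
  have h2 : ∀ k, (if k < j then u j else 0) * (if k < l then v l else 0)
      = if k < min j l then u j * v l else 0 := by
    intro k
    by_cases a : k < j <;> by_cases b : k < l <;> simp [a, b]
  simp_rw [h2]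
  rw [← Finset.sum_filter]
  have h3 : (Finset.range n).filter (fun k => k < min j l) = Finset.range (min j l) := by
    ext k
    simp only [Finset.mem_filter, Finset.mem_range]
    omega
  rw [h3, Finset.sum_const, Finset.card_range, nsmul_eq_mul]
  push_cast
  ring

lemma cov_noise {g : ℝ → ℝ} {V B : ℝ} (hV : BVb g V) (hB : ∀ x, |g x| ≤ B)
    (hz : ∀ x, x < 0 ∨ 2 < x → g x = 0) :
    ∃ K : ℝ, 0 ≤ K ∧ ∀ n m : ℕ, 0 < n → 0 < m → ∀ i i' : ℕ, 2 ≤ i → i ≤ m →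
      |((m:ℝ) / n) ^ 2 * ∑ j ∈ Finset.range (n + 1),
          g ((m:ℝ) / n * j - ((i:ℝ) - 2)) * g ((m:ℝ) / n * j - ((i':ℝ) - 2))
        - (m:ℝ) / n * ∫ x in (0:ℝ)..2, g x * g (x - ((i':ℝ) - i))| ≤ K * ((m:ℝ) / n) ^ 2 := by
  have B0 : 0 ≤ B := (abs_nonneg _).trans (hB 0)
  have V0 : 0 ≤ V := by
    obtain ⟨h, h1, -⟩ := hV
    exact (abs_nonneg _).trans (h1 0)
  refine ⟨2 * (B * V + B * V), by positivity, ?_⟩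
  intro n m hn hm i i' hi him
  have hn' : (0:ℝ) < n := by exact_mod_cast hn
  have hi' : (2:ℝ) ≤ i := by exact_mod_cast hi
  have him' : (i:ℝ) ≤ m := by exact_mod_cast him
  have hδ : (0:ℝ) ≤ (m:ℝ) / n := by positivity
  have hδn : (m:ℝ) / n * n = m := by field_simp
  set δ : ℝ := (m:ℝ) / n with hδdef
  have hF : BVb (fun x => g x * g (x - ((i':ℝ) - i))) (B * V + B * V) :=
    hV.mul (hV.shift _) hB fun x => hB _
  have hr := hF.riemann hδ ((i:ℝ) - 2) (Nat.zero_le (n + 1))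
  rw [supp_integral ⟨_, hF⟩ (fun x hx => by rw [hz x hx, zero_mul]) (by simp; linarith)
    (by push_cast; nlinarith)] at hr
  have e : ∀ k : ℕ, δ * k - ((i:ℝ) - 2) - ((i':ℝ) - i) = δ * k - ((i':ℝ) - 2) := by
    intro k; ring
  simp only [e] at hr
  rw [← Finset.range_eq_Ico] at hr
  have : ∀ S I : ℝ, δ ^ 2 * S - δ * I = δ * (δ * S - I) := by intros; ring
  rw [this, abs_mul, abs_of_nonneg hδ]
  calc _ ≤ δ * (2 * (B * V + B * V) * δ) := by gcongr
    _ = _ := by ring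

set_option maxHeartbeats 1000000 in
lemma cov_W {g : ℝ → ℝ} {V B : ℝ} (hV : BVb g V) (hB : ∀ x, |g x| ≤ B)
    (hz : ∀ x, x < 0 ∨ 2 < x → g x = 0) (hint : ∫ x in (0:ℝ)..2, g x = 0) :
    ∃ K : ℝ, 0 ≤ K ∧ ∀ n m : ℕ, 0 < n → 0 < m → m ≤ n → ∀ i i' : ℕ, 2 ≤ i → i ≤ m →
      2 ≤ i' → i' ≤ m →
      |((m:ℝ) / n) ^ 2 * ∑ j ∈ Finset.range (n + 1), ∑ l ∈ Finset.range (n + 1),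
          g ((m:ℝ) / n * j - ((i:ℝ) - 2)) * g ((m:ℝ) / n * l - ((i':ℝ) - 2))
            * ((min j l : ℝ) / n)
        - 1 / (m:ℝ) * ∫ x in (0:ℝ)..2, Lf g x * Lf g (x - ((i':ℝ) - i))|
        ≤ K * (1 / (n:ℝ) + ((m:ℝ) / n) ^ 2) := by
  have B0 : 0 ≤ B := (abs_nonneg _).trans (hB 0)
  have V0 : 0 ≤ V := by
    obtain ⟨h, h1, -⟩ := hV
    exact (abs_nonneg _).trans (h1 0)
  obtain ⟨U, hU⟩ := Lf_bv hV hB hz hint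
  have U0 : 0 ≤ U := by
    obtain ⟨h, h1, -⟩ := hU
    exact (abs_nonneg _).trans (h1 0)
  have hLz := Lf_zero hV hz hint
  have hL0 : Lf g 0 = 0 := hLz 0 (Or.inl le_rfl)
  have hC : ∀ x, |Lf g x| ≤ 2 * U := by
    intro x
    have := hU.bounded x
    rwa [hL0, abs_zero, zero_add] at this
  set L := Lf g with hLdef
  set E : ℝ := 2 * V + B with hE
  have E0 : 0 ≤ E := by positivity
  set S : ℝ := (∫ x in (0:ℝ)..2, |L x|) + 2 * U with hS
  have S0 : 0 ≤ S := by
    have : 0 ≤ ∫ x in (0:ℝ)..2, |L x| :=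
      intervalIntegral.integral_nonneg (by norm_num) fun x _ => abs_nonneg _
    positivity
  set VF : ℝ := 2 * U * U + 2 * U * U with hVF
  have VF0 : 0 ≤ VF := by positivity
  refine ⟨2 * E * S + E ^ 2 + 2 * VF, by positivity, ?_⟩
  intro n m hn hm hmn i i' hi him hi' him'
  have hn' : (0:ℝ) < n := by exact_mod_cast hn
  have hm' : (0:ℝ) < m := by exact_mod_cast hm
  have hmn' : (m:ℝ) ≤ n := by exact_mod_cast hmn
  have hδ : (0:ℝ) ≤ (m:ℝ) / n := by positivity
  have hδ1 : (m:ℝ) / n ≤ 1 := by rw [div_le_one hn']; exact hmn'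
  have hδn : (m:ℝ) / n * n = m := by field_simp
  have hnδ : 1 / (n:ℝ) = 1 / m * ((m:ℝ) / n) := by field_simp
  set δ : ℝ := (m:ℝ) / n with hδdef
  -- tails
  have tail : ∀ r : ℕ, 2 ≤ r → r ≤ m → ∀ k ∈ Finset.range n,
      |δ * ∑ j ∈ Finset.Ico (k + 1) (n + 1), g (δ * j - ((r:ℝ) - 2)) - L (δ * k - ((r:ℝ) - 2))|
        ≤ E * δ := by
    intro r hr hrm k hk
    have hk' : k < n := by simpa using hk
    have hr' : (2:ℝ) ≤ r := by exact_mod_cast hr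
    have hrm' : (r:ℝ) ≤ m := by exact_mod_cast hrm
    have h1 := hV.riemann hδ ((r:ℝ) - 2) (show k ≤ n + 1 by omega)
    rw [Finset.sum_eq_sum_Ico_succ_bot (by omega : k < n + 1),
      ← intervalIntegral.integral_add_adjacent_intervals
        (hV.intervalIntegrable _ 2) (hV.intervalIntegrable 2 _),
      int_zero_Ioo (show (2:ℝ) ≤ δ * ((n + 1 : ℕ) : ℝ) - ((r:ℝ) - 2) by push_cast; nlinarith)
        fun y hy => hz y (Or.inr hy.1), add_zero] at h1
    have h2 := hB (δ * k - ((r:ℝ) - 2))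
    have e : δ * ∑ j ∈ Finset.Ico (k + 1) (n + 1), g (δ * j - ((r:ℝ) - 2))
          - L (δ * k - ((r:ℝ) - 2))
        = (δ * (g (δ * k - ((r:ℝ) - 2)) + ∑ j ∈ Finset.Ico (k + 1) (n + 1), g (δ * j - ((r:ℝ) - 2)))
          - ∫ y in (δ * k - ((r:ℝ) - 2))..2, g y) + (- (δ * g (δ * k - ((r:ℝ) - 2)))) := by
      rw [hLdef, Lf]; ring
    rw [e]
    refine (abs_add_le _ _).trans ?_
    rw [abs_neg, abs_mul, abs_of_nonneg hδ]
    have : δ * |g (δ * k - ((r:ℝ) - 2))| ≤ δ * B := by gcongr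
    rw [hE]
    linarith
  have sumL : ∀ r : ℕ, 2 ≤ r → r ≤ m →
      δ * ∑ k ∈ Finset.range n, |L (δ * k - ((r:ℝ) - 2))| ≤ S := by
    intro r hr hrm
    have hr' : (2:ℝ) ≤ r := by exact_mod_cast hr
    have hrm' : (r:ℝ) ≤ m := by exact_mod_cast hrm
    have h1 := hU.abs.riemann hδ ((r:ℝ) - 2) (Nat.zero_le n)
    rw [supp_integral ⟨_, hU.abs⟩
      (fun x hx => by rw [hLz x (hx.imp le_of_lt le_of_lt), abs_zero]) (by simp; linarith)
      (by linarith), ← Finset.range_eq_Ico] at h1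
    have h2 := (abs_le.1 h1).2
    have : 2 * U * δ ≤ 2 * U := by nlinarith
    rw [hS]
    linarith
  -- rewrite the double sum
  set G : ℕ → ℕ → ℝ := fun r k => δ * ∑ j ∈ Finset.Ico (k + 1) (n + 1), g (δ * j - ((r:ℝ) - 2))
    with hG
  have hsum : δ ^ 2 * ∑ j ∈ Finset.range (n + 1), ∑ l ∈ Finset.range (n + 1),
          g (δ * j - ((i:ℝ) - 2)) * g (δ * l - ((i':ℝ) - 2)) * ((min j l : ℝ) / n)
      = 1 / n * ∑ k ∈ Finset.range n, G i k * G i' k := by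
    have h0 := sum_min (fun j => g (δ * j - ((i:ℝ) - 2))) (fun j => g (δ * j - ((i':ℝ) - 2))) n
    have h1 : ∑ j ∈ Finset.range (n + 1), ∑ l ∈ Finset.range (n + 1),
          g (δ * j - ((i:ℝ) - 2)) * g (δ * l - ((i':ℝ) - 2)) * ((min j l : ℝ) / n)
        = 1 / n * ∑ j ∈ Finset.range (n + 1), ∑ l ∈ Finset.range (n + 1),
          g (δ * j - ((i:ℝ) - 2)) * g (δ * l - ((i':ℝ) - 2)) * (min (j:ℝ) (l:ℝ)) := by
      simp_rw [Finset.mul_sum]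
      refine Finset.sum_congr rfl fun j _ => Finset.sum_congr rfl fun l _ => ?_
      ring
    rw [h1, h0, Finset.mul_sum, Finset.mul_sum, Finset.mul_sum]
    refine Finset.sum_congr rfl fun k _ => ?_
    simp only [hG]
    ring
  rw [hsum]
  -- first error
  have err1 : |∑ k ∈ Finset.range n, G i k * G i' k
      - ∑ k ∈ Finset.range n, L (δ * k - ((i:ℝ) - 2)) * L (δ * k - ((i':ℝ) - 2))|
      ≤ 2 * E * S + n * (E ^ 2 * δ ^ 2) := by
    rw [← Finset.sum_sub_distrib]
    refine (Finset.abs_sum_le_sum_abs _ _).trans ?_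
    calc _ ≤ ∑ k ∈ Finset.range n, (E * δ * |L (δ * k - ((i:ℝ) - 2))|
            + E * δ * |L (δ * k - ((i':ℝ) - 2))| + E ^ 2 * δ ^ 2) := by
          refine Finset.sum_le_sum fun k hk => ?_
          have t1 := tail i hi him k hk
          have t2 := tail i' hi' him' k hk
          change |G i k - L (δ * k - ((i:ℝ) - 2))| ≤ _ at t1
          change |G i' k - L (δ * k - ((i':ℝ) - 2))| ≤ _ at t2
          generalize L (δ * k - ((i:ℝ) - 2)) = p at t1 ⊢
          generalize L (δ * k - ((i':ℝ) - 2)) = q at t2 ⊢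
          have e : G i k * G i' k - p * q
              = (G i k - p) * q + p * (G i' k - q) + (G i k - p) * (G i' k - q) := by ring
          rw [e]
          refine (abs_add_three _ _ _).trans ?_
          rw [abs_mul, abs_mul, abs_mul]
          have a1 : |G i k - p| * |q| ≤ E * δ * |q| := by gcongr
          have a2 : |p| * |G i' k - q| ≤ |p| * (E * δ) := by gcongr
          have a3 : |G i k - p| * |G i' k - q| ≤ (E * δ) * (E * δ) := by gcongr
          nlinarith
      _ = E * (δ * ∑ k ∈ Finset.range n, |L (δ * k - ((i:ℝ) - 2))|)
          + E * (δ * ∑ k ∈ Finset.range n, |L (δ * k - ((i':ℝ) - 2))|) + n * (E ^ 2 * δ ^ 2) := by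
          rw [Finset.sum_add_distrib, Finset.sum_add_distrib, ← Finset.mul_sum, ← Finset.mul_sum,
            Finset.sum_const, Finset.card_range, nsmul_eq_mul]
          ring
      _ ≤ E * S + E * S + n * (E ^ 2 * δ ^ 2) := by
          gcongr
          · exact sumL i hi him
          · exact sumL i' hi' him'
      _ = _ := by ring
  have hiR : (2:ℝ) ≤ i := by exact_mod_cast hi
  have himR : (i:ℝ) ≤ m := by exact_mod_cast him
  have hF : BVb (fun x => L x * L (x - ((i':ℝ) - i))) VF :=
    hU.mul (hU.shift _) hC fun x => hC _
  have err2 := hF.riemann hδ ((i:ℝ) - 2) (Nat.zero_le n)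
  rw [supp_integral ⟨_, hF⟩ (fun x hx => by rw [hLz x (hx.imp le_of_lt le_of_lt), zero_mul])
    (by simp; linarith) (by linarith), ← Finset.range_eq_Ico] at err2
  have e : ∀ k : ℕ, δ * k - ((i:ℝ) - 2) - ((i':ℝ) - i) = δ * k - ((i':ℝ) - 2) := by
    intro k; ring
  simp only [e] at err2
  generalize ∑ k ∈ Finset.range n, G i k * G i' k = X at *
  generalize ∑ k ∈ Finset.range n, L (δ * k - ((i:ℝ) - 2)) * L (δ * k - ((i':ℝ) - 2)) = Y at *
  generalize (∫ x in (0:ℝ)..2, L x * L (x - ((i':ℝ) - i))) = I at *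
  have e3 : 1 / (n:ℝ) * X - 1 / m * I = 1 / n * (X - Y) + 1 / m * (δ * Y - I) := by
    rw [hnδ]; ring
  rw [e3]
  refine (abs_add_le _ _).trans ?_
  rw [abs_mul, abs_mul, abs_of_nonneg (by positivity : 0 ≤ 1 / (n:ℝ)),
    abs_of_nonneg (by positivity : 0 ≤ 1 / (m:ℝ))]
  have b1 : 1 / (n:ℝ) * |X - Y| ≤ 1 / n * (2 * E * S + n * (E ^ 2 * δ ^ 2)) := by gcongr
  have b2 : 1 / (m:ℝ) * |δ * Y - I| ≤ 1 / m * (2 * VF * δ) := by gcongr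
  have b3 : 1 / (n:ℝ) * (2 * E * S + n * (E ^ 2 * δ ^ 2)) = 2 * E * S * (1 / n) + E ^ 2 * δ ^ 2 := by
    field_simp
  have b4 : 1 / (m:ℝ) * (2 * VF * δ) = 2 * VF * (1 / n) := by rw [hnδ]; ring
  have c1 : 0 ≤ 1 / (n:ℝ) := by positivity
  have c2 : 0 ≤ δ ^ 2 := by positivity
  have d1 : 0 ≤ 2 * E * S * δ ^ 2 := by positivity
  have d2 : 0 ≤ E ^ 2 * (1 / (n:ℝ)) := by positivity
  have d3 : 0 ≤ 2 * VF * δ ^ 2 := by positivity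
  calc _ ≤ 2 * E * S * (1 / n) + E ^ 2 * δ ^ 2 + 2 * VF * (1 / n) := by linarith
    _ ≤ _ := by nlinarith

lemma gExt_zero (lam : ℝ → ℝ) (x : ℝ) (hx : x < 0 ∨ 2 < x) : gExt lam x = 0 := by
  unfold gExt
  rw [Set.indicator_of_notMem]
  rintro ⟨h1, h2⟩
  rcases hx with h | h <;> linarith

lemma gExt_eq {lam : ℝ → ℝ} {x : ℝ} (h0 : 0 ≤ x) (h2 : x ≤ 2) : gExt lam x = lam x :=
  Set.indicator_of_mem (show x ∈ Set.Icc (0:ℝ) 2 from ⟨h0, h2⟩) lam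

lemma gExt_anti {lam : ℝ → ℝ} (hlam : IsPreAverageFn lam) (x : ℝ) :
    gExt lam (2 - x) = - gExt lam x := by
  by_cases h0 : x < 0
  · rw [gExt_zero lam x (Or.inl h0), gExt_zero lam (2 - x) (Or.inr (by linarith)), neg_zero]
  by_cases h2 : 2 < x
  · rw [gExt_zero lam x (Or.inr h2), gExt_zero lam (2 - x) (Or.inl (by linarith)), neg_zero]
  push Not at h0 h2
  rw [gExt_eq h0 h2, gExt_eq (by linarith) (by linarith)]
  rcases le_total x 1 with h | h
  · rw [hlam.antisymm x ⟨h0, h⟩, neg_neg]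
  · have := hlam.antisymm (2 - x) ⟨by linarith, by linarith⟩
    rw [this]
    congr 2
    ring

/-- Autocorrelation. -/
noncomputable def acor (f : ℝ → ℝ) (p : ℝ) : ℝ := ∫ x in (0:ℝ)..2, f x * f (x - p)

section acor
variable {f : ℝ → ℝ} {V s : ℝ}

lemma acor_far (hz : ∀ x, x < 0 ∨ 2 < x → f x = 0) {p : ℝ} (hp : 2 ≤ |p|) : acor f p = 0 := by
  unfold acor
  refine int_zero_Ioo (by norm_num) fun x hx => ?_
  rw [hz (x - p), mul_zero]
  rcases le_abs.1 hp with h | h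
  · left; linarith [hx.2]
  · right; linarith [hx.1]

lemma acor_one (hV : BVb f V) (hz : ∀ x, x < 0 ∨ 2 < x → f x = 0) (hs : ∀ x, f (2 - x) = s * f x) :
    acor f 1 = s * ∫ u in (0:ℝ)..1, f u * f (1 - u) := by
  unfold acor
  have hF : BVb (fun x => f x * f (x - 1)) _ := hV.mul (hV.shift 1) hV.bounded fun x => hV.bounded _
  rw [← intervalIntegral.integral_add_adjacent_intervals (hF.intervalIntegrable 0 1)
    (hF.intervalIntegrable 1 2), int_zero_Ioo (by norm_num) fun x hx => by
      rw [hz (x - 1) (Or.inl (by linarith [hx.2])), mul_zero], zero_add]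
  have := intervalIntegral.integral_comp_sub_left (a := 0) (b := 1)
    (fun x => f x * f (x - 1)) (2:ℝ)
  norm_num at this
  rw [← this, ← intervalIntegral.integral_const_mul]
  congr 1
  funext x
  rw [hs x]
  have : (2 - x - 1 : ℝ) = 1 - x := by ring
  rw [this]
  ring

lemma acor_neg_one (hV : BVb f V) (hz : ∀ x, x < 0 ∨ 2 < x → f x = 0)
    (hs : ∀ x, f (2 - x) = s * f x) :
    acor f (-1) = s * ∫ u in (0:ℝ)..1, f u * f (1 - u) := by
  unfold acor
  have hF : BVb (fun x => f x * f (x - (-1))) _ :=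
    hV.mul (hV.shift (-1)) hV.bounded fun x => hV.bounded _
  rw [← intervalIntegral.integral_add_adjacent_intervals (hF.intervalIntegrable 0 1)
    (hF.intervalIntegrable 1 2), int_zero_Ioo (a := 1) (by norm_num) fun x hx => by
      rw [hz (x - (-1)) (Or.inr (by linarith [hx.1])), mul_zero], add_zero]
  rw [← intervalIntegral.integral_const_mul]
  congr 1
  funext x
  have : (x - (-1) : ℝ) = 2 - (1 - x) := by ring
  rw [this, hs]
  ring

lemma acor_zero (hV : BVb f V) (hs : ∀ x, f (2 - x) = s * f x) (hs2 : s ^ 2 = 1) :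
    acor f 0 = 2 * ∫ u in (0:ℝ)..1, f u ^ 2 := by
  unfold acor
  have hF : BVb (fun x => f x * f x) _ := hV.mul hV hV.bounded hV.bounded
  simp only [sub_zero]
  rw [← intervalIntegral.integral_add_adjacent_intervals (hF.intervalIntegrable 0 1)
    (hF.intervalIntegrable 1 2)]
  have := intervalIntegral.integral_comp_sub_left (a := 0) (b := 1)
    (fun x => f x * f x) (2:ℝ)
  norm_num at this
  rw [← this]
  have e : ∀ x, f (2 - x) * f (2 - x) = f x ^ 2 := by
    intro x
    rw [hs x]
    linear_combination (f x ^ 2) * hs2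
  have e' : ∀ x, f x * f x = f x ^ 2 := fun x => by ring
  simp_rw [e, e']
  ring

end acor

section lam
variable {lam : ℝ → ℝ}

lemma gExt_int (hlam : IsPreAverageFn lam) : ∫ x in (0:ℝ)..2, gExt lam x = 0 := by
  have := intervalIntegral.integral_comp_sub_left (a := 0) (b := 2) (gExt lam) (2:ℝ)
  simp only [gExt_anti hlam, intervalIntegral.integral_neg, sub_self, sub_zero] at this
  linarith

lemma Lf_symm (hlam : IsPreAverageFn lam) (x : ℝ) :
    Lf (gExt lam) (2 - x) = 1 * Lf (gExt lam) x := by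
  obtain ⟨V, hV⟩ := bv_gExt hlam
  unfold Lf
  have h1 := intervalIntegral.integral_comp_sub_left (a := 0) (b := x) (gExt lam) (2:ℝ)
  simp only [gExt_anti hlam, intervalIntegral.integral_neg, sub_zero] at h1
  have h2 := intervalIntegral.integral_add_adjacent_intervals (hV.intervalIntegrable 0 x)
    (hV.intervalIntegrable x 2)
  rw [gExt_int hlam] at h2
  linarith

lemma Lf_eq (hlam : IsPreAverageFn lam) {x : ℝ} (h0 : 0 ≤ x) (h2 : x ≤ 2) :
    Lf (gExt lam) x = bigLam lam x := by
  obtain ⟨V, hV⟩ := bv_gExt hlam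
  have h3 := intervalIntegral.integral_add_adjacent_intervals (hV.intervalIntegrable 0 x)
    (hV.intervalIntegrable x 2)
  rw [gExt_int hlam] at h3
  have h4 : ∫ y in (0:ℝ)..x, gExt lam y = ∫ y in (0:ℝ)..x, lam y := by
    refine intervalIntegral.integral_congr fun y hy => ?_
    rw [Set.uIcc_of_le h0] at hy
    exact gExt_eq hy.1 (hy.2.trans h2)
  unfold Lf bigLam
  linarith

lemma acor_L_zero (hlam : IsPreAverageFn lam) : acor (Lf (gExt lam)) 0 = 1 := by
  obtain ⟨V, hV⟩ := bv_gExt hlam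
  obtain ⟨U, hU⟩ := Lf_bv hV hV.bounded (gExt_zero lam) (gExt_int hlam)
  rw [acor_zero hU (Lf_symm hlam) (by norm_num)]
  have h := hlam.normalized
  have h2 : (2 * ∫ s in (0:ℝ)..1, (∫ u in (0:ℝ)..s, lam u) ^ 2) = 1 := by
    rwa [Real.sqrt_eq_one] at h
  refine Eq.trans ?_ h2
  congr 1
  refine intervalIntegral.integral_congr fun y hy => ?_
  rw [Set.uIcc_of_le zero_le_one] at hy
  beta_reduce
  rw [Lf_eq hlam hy.1 (by linarith [hy.2]), bigLam, neg_sq]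

lemma acor_L_one (hlam : IsPreAverageFn lam) : acor (Lf (gExt lam)) 1
      = ∫ u in (0:ℝ)..1, bigLam lam u * bigLam lam (1 - u) ∧
    acor (Lf (gExt lam)) (-1) = acor (Lf (gExt lam)) 1 := by
  obtain ⟨V, hV⟩ := bv_gExt hlam
  obtain ⟨U, hU⟩ := Lf_bv hV hV.bounded (gExt_zero lam) (gExt_int hlam)
  have hz : ∀ x, x < 0 ∨ 2 < x → Lf (gExt lam) x = 0 := fun x hx =>
    Lf_zero hV (gExt_zero lam) (gExt_int hlam) x (hx.imp le_of_lt le_of_lt)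
  rw [acor_one hU hz (Lf_symm hlam), acor_neg_one hU hz (Lf_symm hlam)]
  refine ⟨?_, rfl⟩
  rw [one_mul]
  refine intervalIntegral.integral_congr fun y hy => ?_
  rw [Set.uIcc_of_le zero_le_one] at hy
  beta_reduce
  rw [Lf_eq hlam hy.1 (by linarith [hy.2]), Lf_eq hlam (by linarith [hy.2]) (by linarith [hy.1])]

lemma gExt_anti' (hlam : IsPreAverageFn lam) (x : ℝ) :
    gExt lam (2 - x) = (-1) * gExt lam x := by rw [gExt_anti hlam]; ring

lemma acor_g_zero (hlam : IsPreAverageFn lam) :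
    acor (gExt lam) 0 = 2 * ∫ u in (0:ℝ)..1, lam u ^ 2 := by
  obtain ⟨V, hV⟩ := bv_gExt hlam
  rw [acor_zero hV (gExt_anti' hlam) (by norm_num)]
  congr 1
  refine intervalIntegral.integral_congr fun y hy => ?_
  rw [Set.uIcc_of_le zero_le_one] at hy
  beta_reduce
  rw [gExt_eq hy.1 (by linarith [hy.2])]

lemma acor_g_one (hlam : IsPreAverageFn lam) : acor (gExt lam) 1
      = - ∫ u in (0:ℝ)..1, lam u * lam (1 - u) ∧
    acor (gExt lam) (-1) = acor (gExt lam) 1 := by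
  obtain ⟨V, hV⟩ := bv_gExt hlam
  rw [acor_one hV (gExt_zero lam) (gExt_anti' hlam), acor_neg_one hV (gExt_zero lam) (gExt_anti' hlam)]
  refine ⟨?_, rfl⟩
  rw [neg_one_mul]
  congr 1
  refine intervalIntegral.integral_congr fun y hy => ?_
  rw [Set.uIcc_of_le zero_le_one] at hy
  beta_reduce
  rw [gExt_eq hy.1 (by linarith [hy.2]), gExt_eq (by linarith [hy.2]) (by linarith [hy.1])]

end lam

lemma sum_band (φ : ℝ → ℝ) (hφ : ∀ x, 2 ≤ |x| → φ x = 0) (h1 : φ (-1) = φ 1) (m : ℕ)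
    (hm : 2 ≤ m) :
    ∑ i ∈ Finset.Icc 2 m, ∑ j ∈ Finset.Icc 2 m, φ ((j:ℝ) - i)
      = ((m:ℝ) - 1) * φ 0 + 2 * ((m:ℝ) - 2) * φ 1 := by
  induction m, hm using Nat.le_induction with
  | base => simp; norm_num
  | succ m hm ih =>
    have hle : 2 ≤ m + 1 := by omega
    have r1 : ∑ j ∈ Finset.Icc 2 m, φ ((j:ℝ) - ((m + 1 : ℕ) : ℝ)) = φ (-1) := by
      rw [Finset.sum_eq_single m]
      · congr 1; push_cast; ring
      · intro j hj hne
        have hj' := Finset.mem_Icc.1 hj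
        refine hφ _ ?_
        have : (j:ℝ) + 1 ≤ m := by exact_mod_cast (by omega : j + 1 ≤ m)
        rw [abs_sub_comm]
        refine le_trans ?_ (le_abs_self _)
        push_cast; linarith
      · intro h; exact absurd (Finset.mem_Icc.2 ⟨hm, le_rfl⟩) h
    have r2 : ∑ i ∈ Finset.Icc 2 m, φ (((m + 1 : ℕ) : ℝ) - (i:ℝ)) = φ 1 := by
      rw [Finset.sum_eq_single m]
      · congr 1; push_cast; ring
      · intro j hj hne
        have hj' := Finset.mem_Icc.1 hj
        refine hφ _ ?_
        have : (j:ℝ) + 1 ≤ m := by exact_mod_cast (by omega : j + 1 ≤ m)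
        refine le_trans ?_ (le_abs_self _)
        push_cast; linarith
      · intro h; exact absurd (Finset.mem_Icc.2 ⟨hm, le_rfl⟩) h
    rw [Finset.sum_Icc_succ_top hle]
    simp_rw [Finset.sum_Icc_succ_top hle]
    rw [Finset.sum_add_distrib, ih, r1, r2, sub_self, h1]
    push_cast
    ring

lemma preAvg_eq {Ω : Type*} (lam : ℝ → ℝ) (σ τ : ℝ) (W η : ℕ → Ω → ℝ) (n m : ℕ) (hn : 0 < n)
    (hm : 0 < m) (i : ℕ) :
    preAvg lam n m (obs σ τ W η) i
      = linC n W η (fun j => σ * ((m:ℝ) / n) * gExt lam ((m:ℝ) / n * j - ((i:ℝ) - 2)))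
        (fun j => τ * ((m:ℝ) / n) * gExt lam ((m:ℝ) / n * j - ((i:ℝ) - 2))) := by
  funext ω
  have hn' : (0:ℝ) < n := by exact_mod_cast hn
  have hm' : (0:ℝ) < m := by exact_mod_cast hm
  unfold preAvg linC blockIdx obs
  rw [Finset.sum_filter, Finset.mul_sum]
  refine Finset.sum_congr rfl fun j _ => ?_
  have e : (m:ℝ) * j / n - ((i:ℝ) - 2) = (m:ℝ) / n * j - ((i:ℝ) - 2) := by ring
  have e1 : ((i : ℝ) - 2) / m ≤ (j : ℝ) / n ↔ 0 ≤ (m:ℝ) / n * j - ((i:ℝ) - 2) := by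
    rw [div_le_iff₀ hm', sub_nonneg]
    have : (j:ℝ) / n * m = (m:ℝ) / n * j := by ring
    rw [this]
  have e2 : (j : ℝ) / n ≤ (i : ℝ) / m ↔ (m:ℝ) / n * j - ((i:ℝ) - 2) ≤ 2 := by
    rw [le_div_iff₀ hm']
    have : (j:ℝ) / n * m = (m:ℝ) / n * j := by ring
    rw [this]
    constructor <;> intro h <;> linarith
  rw [e]
  beta_reduce
  split_ifs with h
  · rw [gExt_eq (e1.1 h.1) (e2.1 h.2)]
    ring
  · have : gExt lam ((m:ℝ) / n * j - ((i:ℝ) - 2)) = 0 := by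
      refine Set.indicator_of_notMem (fun hh => h ⟨e1.2 hh.1, e2.2 hh.2⟩) lam
    rw [this]
    ring

lemma cov_main {lam : ℝ → ℝ} (hlam : IsPreAverageFn lam) (σ τ : ℝ) :
    ∃ K : ℝ, 0 ≤ K ∧ ∀ (Ω : Type*) [MeasureSpace Ω] (n m : ℕ) (W η : ℕ → Ω → ℝ),
      IsSimplifiedModel n W η → 0 < n → 0 < m → m ≤ n →
      ∀ i i' : ℕ, 2 ≤ i → i ≤ m → 2 ≤ i' → i' ≤ m →
      |(m:ℝ) * (∫ ω, preAvg lam n m (obs σ τ W η) i ω * preAvg lam n m (obs σ τ W η) i' ω)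
        - (σ ^ 2 * acor (Lf (gExt lam)) ((i':ℝ) - i)
          + τ ^ 2 * (m * ((m:ℝ) / n)) * acor (gExt lam) ((i':ℝ) - i))|
      ≤ K * (((m:ℝ) / n) * (1 + m * ((m:ℝ) / n))) := by
  obtain ⟨V, hV⟩ := bv_gExt hlam
  obtain ⟨K1, hK1, H1⟩ := cov_W hV hV.bounded (gExt_zero lam) (gExt_int hlam)
  obtain ⟨K2, hK2, H2⟩ := cov_noise hV hV.bounded (gExt_zero lam)
  refine ⟨σ ^ 2 * K1 + τ ^ 2 * K2, by positivity, ?_⟩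
  intro Ω _ n m W η hmod hn hm hmn i i' hi him hi' him'
  have h1 := H1 n m hn hm hmn i i' hi him hi' him'
  have h2 := H2 n m hn hm i i' hi him
  rw [preAvg_eq lam σ τ W η n m hn hm, preAvg_eq lam σ τ W η n m hn hm, linC_cov hmod]
  have hn' : (0:ℝ) < n := by exact_mod_cast hn
  have hm' : (0:ℝ) < m := by exact_mod_cast hm
  have hnm : (m:ℝ) * (1 / n) = m / n := by ring
  have hm1 : (m:ℝ) * (1 / m) = 1 := by field_simp
  set δ : ℝ := (m:ℝ) / n with hδ
  have hδ0 : 0 ≤ δ := by positivity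
  have e1 : ∑ j ∈ Finset.range (n + 1), ∑ l ∈ Finset.range (n + 1),
      σ * δ * gExt lam (δ * j - ((i:ℝ) - 2)) * (σ * δ * gExt lam (δ * l - ((i':ℝ) - 2)))
        * ((min j l : ℝ) / n)
      = σ ^ 2 * (δ ^ 2 * ∑ j ∈ Finset.range (n + 1), ∑ l ∈ Finset.range (n + 1),
        gExt lam (δ * j - ((i:ℝ) - 2)) * gExt lam (δ * l - ((i':ℝ) - 2)) * ((min j l : ℝ) / n)) := by
    simp_rw [Finset.mul_sum]
    refine Finset.sum_congr rfl fun j _ => Finset.sum_congr rfl fun l _ => ?_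
    ring
  have e2 : ∑ j ∈ Finset.range (n + 1),
      τ * δ * gExt lam (δ * j - ((i:ℝ) - 2)) * (τ * δ * gExt lam (δ * j - ((i':ℝ) - 2)))
      = τ ^ 2 * (δ ^ 2 * ∑ j ∈ Finset.range (n + 1),
        gExt lam (δ * j - ((i:ℝ) - 2)) * gExt lam (δ * j - ((i':ℝ) - 2))) := by
    simp_rw [Finset.mul_sum]
    refine Finset.sum_congr rfl fun j _ => ?_
    ring
  rw [e1, e2]
  change |_ - 1 / (m:ℝ) * acor (Lf (gExt lam)) ((i':ℝ) - i)| ≤ _ at h1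
  change |_ - δ * acor (gExt lam) ((i':ℝ) - i)| ≤ _ at h2
  generalize acor (Lf (gExt lam)) ((i':ℝ) - i) = p at *
  generalize acor (gExt lam) ((i':ℝ) - i) = q at *
  generalize (δ ^ 2 * ∑ j ∈ Finset.range (n + 1), ∑ l ∈ Finset.range (n + 1),
        gExt lam (δ * j - ((i:ℝ) - 2)) * gExt lam (δ * l - ((i':ℝ) - 2)) * ((min j l : ℝ) / n)) = S
    at *
  generalize (δ ^ 2 * ∑ j ∈ Finset.range (n + 1),
        gExt lam (δ * j - ((i:ℝ) - 2)) * gExt lam (δ * j - ((i':ℝ) - 2))) = T at *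
  have e3 : (m:ℝ) * (σ ^ 2 * S + τ ^ 2 * T) - (σ ^ 2 * p + τ ^ 2 * (m * δ) * q)
      = σ ^ 2 * m * (S - 1 / m * p) + τ ^ 2 * m * (T - δ * q) := by
    linear_combination (σ ^ 2 * p) * hm1
  rw [e3]
  refine (abs_add_le _ _).trans ?_
  rw [abs_mul (σ ^ 2 * (m:ℝ)), abs_mul (τ ^ 2 * (m:ℝ)),
    abs_of_nonneg (by positivity : 0 ≤ σ ^ 2 * (m:ℝ)),
    abs_of_nonneg (by positivity : 0 ≤ τ ^ 2 * (m:ℝ))]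
  have b1 : σ ^ 2 * m * |S - 1 / m * p| ≤ σ ^ 2 * m * (K1 * (1 / n + δ ^ 2)) := by gcongr
  have b2 : τ ^ 2 * m * |T - δ * q| ≤ τ ^ 2 * m * (K2 * δ ^ 2) := by gcongr
  have b3 : σ ^ 2 * m * (K1 * (1 / n + δ ^ 2)) = σ ^ 2 * K1 * (δ * (1 + m * δ)) := by
    linear_combination (σ ^ 2 * K1) * hnm
  have b4 : 0 ≤ τ ^ 2 * K2 * δ := by positivity
  nlinarith

lemma mOf_ratio (c : ℝ) (hc : 0 < c) :
    Filter.Tendsto (fun n : ℕ => (mOf c n : ℝ) / Real.sqrt n) Filter.atTop (nhds c) := by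
  have hs : Filter.Tendsto (fun n : ℕ => Real.sqrt (n:ℝ)) Filter.atTop Filter.atTop :=
    Real.tendsto_sqrt_atTop.comp tendsto_natCast_atTop_atTop
  have hk : Filter.Tendsto (fun n : ℕ => (⌊Real.sqrt n / c⌋₊ : ℝ) / Real.sqrt n) Filter.atTop
      (nhds (1 / c)) := by
    have h := (tendsto_nat_floor_mul_div_atTop (R := ℝ) (a := 1 / c) (by positivity)).comp hs
    refine h.congr fun n => ?_
    simp only [Function.comp]
    congr 3
    ring
  have hk2 : Filter.Tendsto (fun n : ℕ => Real.sqrt n / (⌊Real.sqrt n / c⌋₊ : ℝ)) Filter.atTop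
      (nhds c) := by
    have h := hk.inv₀ (by positivity)
    rw [one_div, inv_inv] at h
    exact h.congr fun n => by rw [inv_div]
  have hi : Filter.Tendsto (fun n : ℕ => 1 / Real.sqrt (n:ℝ)) Filter.atTop (nhds 0) := by
    simp only [one_div]
    exact hs.inv_tendsto_atTop
  have hlow := hk2.sub hi
  rw [sub_zero] at hlow
  have key : ∀ n : ℕ, 0 < n → (n:ℝ) / (⌊Real.sqrt n / c⌋₊ : ℝ) / Real.sqrt n
      = Real.sqrt n / (⌊Real.sqrt n / c⌋₊ : ℝ) := by
    intro n hn
    have h0 : 0 < Real.sqrt n := Real.sqrt_pos.2 (by exact_mod_cast hn)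
    rw [div_right_comm, Real.div_sqrt]
  refine tendsto_of_tendsto_of_tendsto_of_le_of_le' hlow hk2 ?_ ?_
  · filter_upwards [Filter.eventually_gt_atTop 0] with n hn
    have h0 : 0 < Real.sqrt n := Real.sqrt_pos.2 (by exact_mod_cast hn)
    have h1 : (n:ℝ) / (⌊Real.sqrt n / c⌋₊ : ℝ) < (mOf c n : ℝ) + 1 := by
      have := Nat.lt_floor_add_one ((n:ℝ) / (⌊Real.sqrt n / c⌋₊ : ℝ))
      rwa [Nat.floor_div_eq_div] at this
    rw [← key n hn, ← sub_div]
    gcongr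
    linarith
  · filter_upwards [Filter.eventually_gt_atTop 0] with n hn
    have h0 : 0 < Real.sqrt n := Real.sqrt_pos.2 (by exact_mod_cast hn)
    have h1 : (mOf c n : ℝ) ≤ (n:ℝ) / (⌊Real.sqrt n / c⌋₊ : ℝ) := by
      have := Nat.floor_le (a := (n:ℝ) / (⌊Real.sqrt n / c⌋₊ : ℝ)) (by positivity)
      rwa [Nat.floor_div_eq_div] at this
    rw [← key n hn]
    gcongr

lemma det_bound (φ : ℝ → ℝ) (hφ : ∀ x, 2 ≤ |x| → φ x = 0) (h1 : φ (-1) = φ 1) (m : ℕ)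
    (hm : 2 ≤ m) (C : ℕ → ℕ → ℝ) (e : ℝ) (he : 0 ≤ e)
    (hC : ∀ i ∈ Finset.Icc 2 m, ∀ j ∈ Finset.Icc 2 m, |C i j - φ ((j:ℝ) - i)| ≤ e) :
    |(∑ i ∈ Finset.Icc 2 m, ∑ j ∈ Finset.Icc 2 m, C i j ^ 2)
      - (((m:ℝ) - 1) * φ 0 ^ 2 + 2 * ((m:ℝ) - 2) * φ 1 ^ 2)|
      ≤ m * (2 * e * (|φ 0| + 2 * |φ 1|) + m * e ^ 2) := by
  have hm' : (2:ℝ) ≤ m := by exact_mod_cast hm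
  have b1 := sum_band (fun x => φ x ^ 2) (fun x hx => by simp [hφ x hx]) (by simp [h1]) m hm
  have b2 := sum_band (fun x => |φ x|) (fun x hx => by simp [hφ x hx]) (by simp [h1]) m hm
  rw [← b1]
  have step : |(∑ i ∈ Finset.Icc 2 m, ∑ j ∈ Finset.Icc 2 m, C i j ^ 2)
      - ∑ i ∈ Finset.Icc 2 m, ∑ j ∈ Finset.Icc 2 m, φ ((j:ℝ) - i) ^ 2|
      ≤ ∑ i ∈ Finset.Icc 2 m, ∑ j ∈ Finset.Icc 2 m, (2 * e * |φ ((j:ℝ) - i)| + e ^ 2) := by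
    rw [← Finset.sum_sub_distrib]
    refine (Finset.abs_sum_le_sum_abs _ _).trans (Finset.sum_le_sum fun i hi => ?_)
    rw [← Finset.sum_sub_distrib]
    refine (Finset.abs_sum_le_sum_abs _ _).trans (Finset.sum_le_sum fun j hj => ?_)
    have h := hC i hi j hj
    have e1 : C i j ^ 2 - φ ((j:ℝ) - i) ^ 2
        = 2 * (C i j - φ ((j:ℝ) - i)) * φ ((j:ℝ) - i) + (C i j - φ ((j:ℝ) - i)) ^ 2 := by ring
    rw [e1]
    refine (abs_add_le _ _).trans ?_
    rw [abs_mul, abs_mul, abs_pow, abs_two]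
    gcongr
  refine step.trans ?_
  simp only [Finset.sum_add_distrib, ← Finset.mul_sum, b2, Finset.sum_const, Nat.card_Icc,
    nsmul_eq_mul]
  have hcard : ((m + 1 - 2 : ℕ) : ℝ) = (m:ℝ) - 1 := by
    rw [Nat.cast_sub (by omega)]; push_cast; ring
  rw [hcard]
  have a0 := abs_nonneg (φ 0)
  have a1 := abs_nonneg (φ 1)
  have p0 : ((m:ℝ) - 1) * |φ 0| ≤ m * |φ 0| := by gcongr; linarith
  have p1 : ((m:ℝ) - 2) * |φ 1| ≤ m * |φ 1| := by gcongr; linarith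
  have p2 : ((m:ℝ) - 1) * (((m:ℝ) - 1) * e ^ 2) ≤ m * (m * e ^ 2) := by
    nlinarith [mul_nonneg (sq_nonneg e) (by linarith : (0:ℝ) ≤ 2 * m - 1)]
  nlinarith [mul_le_mul_of_nonneg_left p0 he, mul_le_mul_of_nonneg_left p1 he]

lemma var_formula {Ω : Type*} [MeasureSpace Ω] [IsProbabilityMeasure (ℙ : Measure Ω)]
    (lam : ℝ → ℝ) (σ τ : ℝ) (W η : ℕ → Ω → ℝ) (n m : ℕ) (hn : 0 < n)
    (hm : 0 < m) (h : IsSimplifiedModel n W η) :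
    variance (fun ω => ∑ i ∈ Finset.Icc 2 m, (preAvg lam n m (obs σ τ W η) i ω) ^ 2) ℙ
    = 2 * ∑ i ∈ Finset.Icc 2 m, ∑ j ∈ Finset.Icc 2 m,
      (∫ ω, preAvg lam n m (obs σ τ W η) i ω * preAvg lam n m (obs σ τ W η) j ω) ^ 2 := by
  refine variance_sum_sq (fun i => preAvg lam n m (obs σ τ W η) i) (Finset.Icc 2 m) ?_ ?_ ?_
  · intro i _
    simp only [preAvg_eq lam σ τ W η n m hn hm]
    exact linC_gauss h _ _
  · intro i _ j _
    simp only [preAvg_eq lam σ τ W η n m hn hm]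
    convert linC_gauss h (fun l => σ * ((m:ℝ) / n) * gExt lam ((m:ℝ) / n * l - ((i:ℝ) - 2))
      + σ * ((m:ℝ) / n) * gExt lam ((m:ℝ) / n * l - ((j:ℝ) - 2)))
      (fun l => τ * ((m:ℝ) / n) * gExt lam ((m:ℝ) / n * l - ((i:ℝ) - 2))
      + τ * ((m:ℝ) / n) * gExt lam ((m:ℝ) / n * l - ((j:ℝ) - 2))) using 1
    funext ω
    unfold linC
    rw [← Finset.sum_add_distrib]
    exact Finset.sum_congr rfl fun l _ => by ring
  · intro i _ j _
    simp only [preAvg_eq lam σ τ W η n m hn hm]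
    convert linC_gauss h (fun l => σ * ((m:ℝ) / n) * gExt lam ((m:ℝ) / n * l - ((i:ℝ) - 2))
      - σ * ((m:ℝ) / n) * gExt lam ((m:ℝ) / n * l - ((j:ℝ) - 2)))
      (fun l => τ * ((m:ℝ) / n) * gExt lam ((m:ℝ) / n * l - ((i:ℝ) - 2))
      - τ * ((m:ℝ) / n) * gExt lam ((m:ℝ) / n * l - ((j:ℝ) - 2))) using 1
    funext ω
    unfold linC
    rw [← Finset.sum_sub_distrib]
    exact Finset.sum_congr rfl fun l _ => by ring

theorem variance_sum_squared_preAveraged_obs (σ τ c : ℝ) (hσ : 0 < σ) (hτ : 0 < τ) (hc : 0 < c)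
    (lam : ℝ → ℝ) (hlam : IsPreAverageFn lam)
    (Ω : ℕ → Type*) [∀ n, MeasureSpace (Ω n)] [∀ n, IsProbabilityMeasure (ℙ : Measure (Ω n))]
    (W η : (n : ℕ) → ℕ → Ω n → ℝ)
    (hmodel : ∀ n, IsSimplifiedModel n (W n) (η n)) :
    Filter.Tendsto (fun n : ℕ => Real.sqrt n *
        variance (fun ω => ∑ i ∈ Finset.Icc 2 (mOf c n),
          (preAvg lam n (mOf c n) (obs σ τ (W n) (η n)) i ω) ^ 2) ℙ)
      Filter.atTop
      (nhds ((4 / c) * (σ ^ 2 * (∫ u in (0:ℝ)..1, bigLam lam u * bigLam lam (1 - u))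
              - τ ^ 2 * c ^ 2 * ∫ u in (0:ℝ)..1, lam u * lam (1 - u)) ^ 2
          + (2 / c) * (σ ^ 2 + 2 * τ ^ 2 * c ^ 2 * ∫ u in (0:ℝ)..1, (lam u) ^ 2) ^ 2)) := by
  obtain ⟨K, hK, hcov⟩ := cov_main hlam σ τ
  obtain ⟨V, hV⟩ := bv_gExt hlam
  have hLz : ∀ x, x < 0 ∨ 2 < x → Lf (gExt lam) x = 0 := fun x hx =>
    Lf_zero hV (gExt_zero lam) (gExt_int hlam) x (hx.imp le_of_lt le_of_lt)
  obtain ⟨L1, L1'⟩ := acor_L_one hlam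
  obtain ⟨G1, G1'⟩ := acor_g_one hlam
  have L0 := acor_L_zero hlam
  have G0 := acor_g_zero hlam
  have hr := mOf_ratio c hc
  set r : ℕ → ℝ := fun n => (mOf c n : ℝ) / Real.sqrt n with hrdef
  set J : ℝ → ℝ → ℝ := fun q p => σ ^ 2 * acor (Lf (gExt lam)) p
    + τ ^ 2 * q * acor (gExt lam) p with hJ
  have hs : Filter.Tendsto (fun n : ℕ => Real.sqrt (n:ℝ)) Filter.atTop Filter.atTop :=
    Real.tendsto_sqrt_atTop.comp tendsto_natCast_atTop_atTop
  have hsi : Filter.Tendsto (fun n : ℕ => (Real.sqrt (n:ℝ))⁻¹) Filter.atTop (nhds 0) :=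
    hs.inv_tendsto_atTop
  have hri : Filter.Tendsto (fun n : ℕ => (r n)⁻¹) Filter.atTop (nhds c⁻¹) := hr.inv₀ hc.ne'
  have hr2 := hr.pow 2
  have hJt : ∀ p, Filter.Tendsto (fun n => J (r n ^ 2) p) Filter.atTop (nhds (J (c ^ 2) p)) := by
    intro p
    exact tendsto_const_nhds.add ((tendsto_const_nhds.mul hr2).mul tendsto_const_nhds)
  -- error size
  set e : ℕ → ℝ := fun n => K * (r n * (Real.sqrt n)⁻¹ * (1 + r n ^ 2)) with hedef
  have he : Filter.Tendsto e Filter.atTop (nhds 0) := by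
    have := ((hr.mul hsi).mul (hr2.const_add 1)).const_mul K
    simpa using this
  -- m * e^2
  have hme : Filter.Tendsto (fun n => K ^ 2 * (r n ^ 3 * (Real.sqrt n)⁻¹ * (1 + r n ^ 2) ^ 2))
      Filter.atTop (nhds 0) := by
    have := (((hr.pow 3).mul hsi).mul ((hr2.const_add 1).pow 2)).const_mul (K ^ 2)
    simpa using this
  have hminv : Filter.Tendsto (fun n => (r n)⁻¹ * (Real.sqrt n)⁻¹) Filter.atTop (nhds 0) := by
    simpa using hri.mul hsi
  -- main term
  have hmain : Filter.Tendsto (fun n => 2 * (r n)⁻¹ *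
      ((1 - (r n)⁻¹ * (Real.sqrt n)⁻¹) * J (r n ^ 2) 0 ^ 2
        + 2 * (1 - 2 * ((r n)⁻¹ * (Real.sqrt n)⁻¹)) * J (r n ^ 2) 1 ^ 2)) Filter.atTop
      (nhds (2 * c⁻¹ * ((1 - 0) * J (c ^ 2) 0 ^ 2 + 2 * (1 - 2 * 0) * J (c ^ 2) 1 ^ 2))) :=
    (hri.const_mul 2).mul (((hminv.const_sub 1).mul ((hJt 0).pow 2)).add
      ((((hminv.const_mul 2).const_sub 1).const_mul 2).mul ((hJt 1).pow 2)))
  have herr : Filter.Tendsto (fun n => 2 * (r n)⁻¹ *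
      (2 * e n * (|J (r n ^ 2) 0| + 2 * |J (r n ^ 2) 1|)
        + K ^ 2 * (r n ^ 3 * (Real.sqrt n)⁻¹ * (1 + r n ^ 2) ^ 2))) Filter.atTop (nhds 0) := by
    have := (hri.const_mul 2).mul (((he.const_mul 2).mul ((hJt 0).abs.add
      ((hJt 1).abs.const_mul 2))).add hme)
    simpa using this
  have hlim : (4 / c) * (σ ^ 2 * (∫ u in (0:ℝ)..1, bigLam lam u * bigLam lam (1 - u))
              - τ ^ 2 * c ^ 2 * ∫ u in (0:ℝ)..1, lam u * lam (1 - u)) ^ 2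
          + (2 / c) * (σ ^ 2 + 2 * τ ^ 2 * c ^ 2 * ∫ u in (0:ℝ)..1, (lam u) ^ 2) ^ 2
      = 2 * c⁻¹ * ((1 - 0) * J (c ^ 2) 0 ^ 2 + 2 * (1 - 2 * 0) * J (c ^ 2) 1 ^ 2) := by
    simp only [hJ, L0, L1, G0, G1]
    ring
  rw [hlim]
  refine tendsto_of_tendsto_of_dist hmain ?_
  refine squeeze_zero' (Filter.Eventually.of_forall fun _ => dist_nonneg) ?_ herr
  have hm2 : ∀ᶠ n : ℕ in Filter.atTop, 2 ≤ mOf c n := by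
    have h1 : Filter.Tendsto (fun n => r n * Real.sqrt n) Filter.atTop Filter.atTop :=
      hr.pos_mul_atTop hc hs
    filter_upwards [h1.eventually_ge_atTop 2, Filter.eventually_gt_atTop 0] with n h hn
    have h0 : 0 < Real.sqrt n := Real.sqrt_pos.2 (by exact_mod_cast hn)
    rw [hrdef] at h
    simp only at h
    rw [div_mul_cancel₀ _ h0.ne'] at h
    exact_mod_cast h
  filter_upwards [hm2, Filter.eventually_gt_atTop 0] with n hm hn
  have h0 : 0 < Real.sqrt n := Real.sqrt_pos.2 (by exact_mod_cast hn)
  have hss : Real.sqrt n * Real.sqrt n = n := Real.mul_self_sqrt (by positivity)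
  have hmn : mOf c n ≤ n := Nat.div_le_self _ _
  have hmr : (mOf c n : ℝ) = r n * Real.sqrt n := by
    simp only [hrdef]; rw [div_mul_cancel₀ _ h0.ne']
  have hm0 : (0:ℝ) < mOf c n := by exact_mod_cast (by omega : 0 < mOf c n)
  have hrpos : 0 < r n := div_pos hm0 h0
  have hδ : (mOf c n : ℝ) / n = r n * (Real.sqrt n)⁻¹ := by
    have : (mOf c n : ℝ) / n = r n * Real.sqrt n / (Real.sqrt n * Real.sqrt n) := by
      rw [hss, hmr]
    rw [this]; field_simp
  have hmδ : (mOf c n : ℝ) * ((mOf c n : ℝ) / n) = r n ^ 2 := by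
    rw [hδ, hmr]; field_simp
  have hdet := det_bound (J (r n ^ 2))
    (fun x hx => by simp only [hJ]; rw [acor_far hLz hx, acor_far (gExt_zero lam) hx]; ring)
    (by simp only [hJ]; rw [L1', G1']) (mOf c n) hm
    (fun i j => (mOf c n : ℝ) * ∫ ω, preAvg lam n (mOf c n) (obs σ τ (W n) (η n)) i ω
      * preAvg lam n (mOf c n) (obs σ τ (W n) (η n)) j ω) (e n) (by positivity)
    (by
      intro i hi j hj
      rw [Finset.mem_Icc] at hi hj
      have := hcov (Ω n) n (mOf c n) (W n) (η n) (hmodel n) hn (by omega) hmn i j hi.1 hi.2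
        hj.1 hj.2
      rw [hmδ, hδ] at this
      exact this)
  rw [var_formula lam σ τ (W n) (η n) n (mOf c n) hn (by omega) (hmodel n)]
  simp only [mul_pow, ← Finset.mul_sum] at hdet
  generalize (∑ i ∈ Finset.Icc 2 (mOf c n), ∑ j ∈ Finset.Icc 2 (mOf c n),
      (∫ ω, preAvg lam n (mOf c n) (obs σ τ (W n) (η n)) i ω
        * preAvg lam n (mOf c n) (obs σ τ (W n) (η n)) j ω) ^ 2) = S at hdet ⊢
  rw [dist_comm, Real.dist_eq]
  have hfac : Real.sqrt n * (2 * S) - 2 * (r n)⁻¹ *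
      ((1 - (r n)⁻¹ * (Real.sqrt n)⁻¹) * J (r n ^ 2) 0 ^ 2
        + 2 * (1 - 2 * ((r n)⁻¹ * (Real.sqrt n)⁻¹)) * J (r n ^ 2) 1 ^ 2)
      = 2 * (r n)⁻¹ * (mOf c n : ℝ)⁻¹ * ((mOf c n : ℝ) ^ 2 * S
        - (((mOf c n : ℝ) - 1) * J (r n ^ 2) 0 ^ 2
          + 2 * ((mOf c n : ℝ) - 2) * J (r n ^ 2) 1 ^ 2)) := by
    rw [hmr]
    generalize J (r n ^ 2) 0 = A
    generalize J (r n ^ 2) 1 = B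
    generalize r n = R at hrpos
    generalize Real.sqrt n = Q at h0
    field_simp
  have hpos : 0 ≤ 2 * (r n)⁻¹ * (mOf c n : ℝ)⁻¹ := by positivity
  have hfin : 2 * (r n)⁻¹ * (mOf c n : ℝ)⁻¹ * ((mOf c n : ℝ) *
      (2 * e n * (|J (r n ^ 2) 0| + 2 * |J (r n ^ 2) 1|) + (mOf c n : ℝ) * e n ^ 2))
      = 2 * (r n)⁻¹ *
      (2 * e n * (|J (r n ^ 2) 0| + 2 * |J (r n ^ 2) 1|)
        + K ^ 2 * (r n ^ 3 * (Real.sqrt n)⁻¹ * (1 + r n ^ 2) ^ 2)) := by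
    have e2 : (mOf c n : ℝ) * e n ^ 2
        = K ^ 2 * (r n ^ 3 * (Real.sqrt n)⁻¹ * (1 + r n ^ 2) ^ 2) := by
      rw [hmr, hedef]
      simp only
      field_simp
    rw [e2]
    field_simp
  rw [hfac, abs_mul, abs_of_nonneg hpos, ← hfin]
  exact mul_le_mul_of_nonneg_left hdet hpos
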